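/- Let ε > 0, d ≥ 1, Δ > 0 and λ₁, λ₂ ∈ (0,1). If λ₁ > 1/(1+Δ)^d and λ₁ < 1 − e^{−ε}, then the joint measures satisfy KL(Q ‖ P) ≤ ε. -/

import Mathlib

open MeasureTheory ProbabilityTheory
open scoped ENNReal

noncomputable section

/-- The closed annulus `{x : a ≤ ‖x‖ ≤ b}` in `ℝ^d` (Euclidean norm). -/
def annulus (d : ℕ) (a b : ℝ) : Set (EuclideanSpace ℝ (Fin d)) :=
  {x | a ≤ ‖x‖ ∧ ‖x‖ ≤ b}

/-- The uniform probability measure on the annulus `A_d(a,b)`: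
Lebesgue measure restricted to the annulus and normalized. -/
def U (d : ℕ) (a b : ℝ) : Measure (EuclideanSpace ℝ (Fin d)) :=
  (volume (annulus d a b))⁻¹ • volume.restrict (annulus d a b)

/-- `C_d`, the Lebesgue volume of the unit ball in `ℝ^d`. -/
def Cd (d : ℕ) : ℝ :=
  (volume (Metric.closedBall (0 : EuclideanSpace ℝ (Fin d)) 1)).toReal

open Classical in
/-- Kullback–Leibler divergence: `∫ log (dμ/dν) dμ` if `μ ≪ ν`, and `+∞` otherwise. -/
def klDiv {X : Type*} [MeasurableSpace X] (μ ν : Measure X) : EReal :=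
  if μ ≪ ν then ((∫ x, Real.log (μ.rnDeriv ν x).toReal ∂μ : ℝ) : EReal) else ⊤

/-- `P₀ = λ₁·U_d(0,1) + (1−λ₁)·U_d(1,1+Δ)`. -/
def P0 (d : ℕ) (Δ l1 : ℝ) : Measure (EuclideanSpace ℝ (Fin d)) :=
  ENNReal.ofReal l1 • U d 0 1 + ENNReal.ofReal (1 - l1) • U d 1 (1 + Δ)

/-- `P₁ = λ₂·U_d(0,1) + (1−λ₂)·U_d(2,3)`. -/
def P1 (d : ℕ) (l2 : ℝ) : Measure (EuclideanSpace ℝ (Fin d)) :=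
  ENNReal.ofReal l2 • U d 0 1 + ENNReal.ofReal (1 - l2) • U d 2 3

/-- `Q₀ = U_d(0,1+Δ)`. -/
def Q0 (d : ℕ) (Δ : ℝ) : Measure (EuclideanSpace ℝ (Fin d)) :=
  U d 0 (1 + Δ)

/-- Joint measure on `ℝ^d × {0,1}` with uniform class prior. -/
def joint (d : ℕ) (μ0 μ1 : Measure (EuclideanSpace ℝ (Fin d))) :
    Measure (EuclideanSpace ℝ (Fin d) × Fin 2) :=
  (1/2 : ℝ≥0∞) • μ0.map (fun x => (x, 0)) + (1/2 : ℝ≥0∞) • μ1.map (fun x => (x, 1))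

/-- Real-valued density of `μ` with respect to Lebesgue measure. -/
def f (d : ℕ) (μ : Measure (EuclideanSpace ℝ (Fin d))) (x : EuclideanSpace ℝ (Fin d)) : ℝ :=
  (μ.rnDeriv volume x).toReal

/-!
Both joint laws carry the same class-`1` part, and the two labels live on disjoint copies of `ℝ^d`,
so the class-`1` part contributes nothing and `KL(Q ‖ P) = KL(Q₀ ‖ P₀) / 2`. The ball of radius
`1 + Δ` is the unit ball together with the shell `A_d(1, 1+Δ)`. On the unit ball `dQ₀/dP₀` equals
`1 / (λ₁ (1+Δ)^d)`, and on the shell it is at most `1 / (1 - λ₁)`, since the shell has less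
volume than the whole ball. Both ratios are at most `e^ε`, hence `KL(Q₀ ‖ P₀) ≤ ε`.
-/

section KLDivergence

variable {X Y : Type*} [MeasurableSpace X] [MeasurableSpace Y] {μ ν ρ σ : Measure X}

lemma klDiv_of_ac (h : μ ≪ ν) : klDiv μ ν = (∫ x, llr μ ν x ∂μ : ℝ) :=
  if_pos h

lemma klDiv_of_not_ac (h : ¬ μ ≪ ν) : klDiv μ ν = ⊤ :=
  if_neg h

lemma klDiv_self (μ : Measure X) [SigmaFinite μ] : klDiv μ μ = 0 := by
  simp [klDiv_of_ac Measure.AbsolutelyContinuous.rfl, integral_congr_ae (llr_self μ)]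

lemma llr_map [SigmaFinite μ] [SigmaFinite ν] {g : X → Y} (hg : MeasurableEmbedding g) :
    llr (μ.map g) (ν.map g) ∘ g =ᵐ[ν] llr μ ν := by
  filter_upwards [hg.rnDeriv_map μ ν] with x hx using by simp only [Function.comp_apply, llr, hx]

lemma integrable_llr_map_iff [SigmaFinite μ] [SigmaFinite ν] {g : X → Y}
    (hg : MeasurableEmbedding g) (h : μ ≪ ν) :
    Integrable (llr (μ.map g) (ν.map g)) (μ.map g) ↔ Integrable (llr μ ν) μ := by
  rw [hg.integrable_map_iff, integrable_congr (h.ae_le (llr_map hg))]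

lemma klDiv_map [SigmaFinite μ] [SigmaFinite ν] {g : X → Y} (hg : MeasurableEmbedding g) :
    klDiv (μ.map g) (ν.map g) = klDiv μ ν := by
  by_cases h : μ ≪ ν
  · rw [klDiv_of_ac h, klDiv_of_ac (hg.absolutelyContinuous_map h), hg.integral_map,
      ← integral_congr_ae (h.ae_le (llr_map hg))]
    rfl
  · have hmap : ¬ μ.map g ≪ ν.map g := fun hmap ↦ h fun s hs ↦ by
      have := @hmap (g '' s)
      simpa only [hg.map_apply, hg.injective.preimage_image, hs, forall_const] using this
    rw [klDiv_of_not_ac h, klDiv_of_not_ac hmap]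

lemma klDiv_smul_smul [IsFiniteMeasure μ] [SigmaFinite ν] {c : ℝ≥0∞} (hc : c ≠ 0)
    (hc_top : c ≠ ∞) : klDiv (c • μ) (c • ν) = (c.toReal : EReal) * klDiv μ ν := by
  by_cases h : μ ≪ ν
  · rw [klDiv_of_ac h, klDiv_of_ac (h.smul c), integral_smul_measure,
      integral_congr_ae (llr_smul_same h c hc hc_top), smul_eq_mul, EReal.coe_mul]
  · have hsmul : ¬ c • μ ≪ c • ν := fun hsmul ↦ h <|
      ((Measure.absolutelyContinuous_smul hc).trans hsmul).trans Measure.smul_absolutelyContinuous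
    rw [klDiv_of_not_ac h, klDiv_of_not_ac hsmul,
      EReal.coe_mul_top_of_pos (ENNReal.toReal_pos hc hc_top)]

lemma llr_add_add_of_mutuallySingular [SigmaFinite μ] [SigmaFinite ν] [SigmaFinite ρ]
    [SigmaFinite σ] (hνσ : ν ⟂ₘ σ) (hρν : ρ ⟂ₘ ν) :
    llr (μ + ρ) (ν + σ) =ᵐ[ν] llr μ ν := by
  filter_upwards [Measure.rnDeriv_add_right_of_mutuallySingular (μ := μ + ρ) hνσ,
    Measure.rnDeriv_add_of_mutuallySingular μ ρ ν hρν] with x hright hleft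
  simp only [llr, hright, hleft]

lemma klDiv_add_add_of_mutuallySingular [SigmaFinite μ] [SigmaFinite ν] [SigmaFinite ρ]
    [SigmaFinite σ] (hνσ : ν ⟂ₘ σ) (hμν : μ ≪ ν) (hρσ : ρ ≪ σ)
    (hμ : Integrable (llr μ ν) μ) (hρ : Integrable (llr ρ σ) ρ) :
    klDiv (μ + ρ) (ν + σ) = klDiv μ ν + klDiv ρ σ := by
  have hllr_μ : llr (μ + ρ) (ν + σ) =ᵐ[μ] llr μ ν :=
    hμν.ae_le (llr_add_add_of_mutuallySingular hνσ (hνσ.symm.mono_ac hρσ .rfl))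
  have hllr_ρ : llr (μ + ρ) (ν + σ) =ᵐ[ρ] llr ρ σ := by
    rw [add_comm μ, add_comm ν]
    exact hρσ.ae_le (llr_add_add_of_mutuallySingular hνσ.symm (hνσ.mono_ac hμν .rfl))
  rw [klDiv_of_ac hμν, klDiv_of_ac hρσ, klDiv_of_ac (hμν.add hρσ),
    integral_add_measure (hμ.congr hllr_μ.symm) (hρ.congr hllr_ρ.symm),
    integral_congr_ae hllr_μ, integral_congr_ae hllr_ρ, EReal.coe_add]

end KLDivergence

section BoundedDensity

variable {X : Type*} [MeasurableSpace X] {μ ν : Measure X} {c : ℝ≥0∞}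

lemma rnDeriv_le_of_le_smul [SigmaFinite ν] (h : μ ≤ c • ν) : ∀ᵐ x ∂ν, μ.rnDeriv ν x ≤ c := by
  refine ae_le_of_forall_setLIntegral_le_of_sigmaFinite (Measure.measurable_rnDeriv μ ν)
    fun s _ _ ↦ ?_
  calc ∫⁻ x in s, μ.rnDeriv ν x ∂ν ≤ μ s := Measure.setLIntegral_rnDeriv_le s
    _ ≤ c * ν s := h s
    _ = ∫⁻ _ in s, c ∂ν := (setLIntegral_const s c).symm

lemma integrable_llr_of_le_smul [SigmaFinite μ] [IsFiniteMeasure ν] (hc : c ≠ ∞)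
    (h : μ ≤ c • ν) : Integrable (llr μ ν) μ := by
  -- `∫ llr μ ν ∂μ = ∫ r log r ∂ν` for the density `r`, and `r log r` is bounded since `r ≤ c`.
  rw [← integrable_rnDeriv_mul_log_iff (Measure.absolutelyContinuous_of_le_smul h)]
  obtain ⟨C, hC⟩ := (isCompact_Icc (a := 0) (b := c.toReal)).exists_bound_of_continuousOn
    Real.continuous_mul_log.continuousOn
  refine .of_bound (by fun_prop) C ?_
  filter_upwards [rnDeriv_le_of_le_smul h] with x hx
  exact hC _ ⟨ENNReal.toReal_nonneg, ENNReal.toReal_mono hc hx⟩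

lemma klDiv_le_log_of_le_smul [IsProbabilityMeasure μ] [IsFiniteMeasure ν] (hc : c ≠ ∞)
    (h : μ ≤ c • ν) : klDiv μ ν ≤ (Real.log c.toReal : EReal) := by
  have hμν : μ ≪ ν := Measure.absolutelyContinuous_of_le_smul h
  have hllr : ∀ᵐ x ∂μ, llr μ ν x ≤ Real.log c.toReal := by
    filter_upwards [hμν.ae_le (rnDeriv_le_of_le_smul h), Measure.rnDeriv_pos hμν,
      hμν.ae_le (Measure.rnDeriv_ne_top μ ν)] with x hx hpos htop
    exact Real.log_le_log (ENNReal.toReal_pos hpos.ne' htop) (ENNReal.toReal_mono hc hx)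
  rw [klDiv_of_ac hμν, EReal.coe_le_coe_iff]
  simpa using integral_mono_ae (integrable_llr_of_le_smul hc h) (integrable_const _) hllr

end BoundedDensity

section Joint

lemma mutuallySingular_map_prodMk {X ι : Type*} [MeasurableSpace X] [MeasurableSpace ι]
    [MeasurableSingletonClass ι] (μ ν : Measure X) {i j : ι} (hij : i ≠ j) :
    μ.map (·, i) ⟂ₘ ν.map (·, j) := by
  have hj : MeasurableSet (Prod.snd ⁻¹' {j} : Set (X × ι)) :=
    measurable_snd (measurableSet_singleton j)
  refine ⟨Prod.snd ⁻¹' {j}, hj, ?_, ?_⟩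
  · rw [Measure.map_apply (by fun_prop) hj]
    simp [Set.preimage_preimage, hij]
  · rw [Measure.map_apply (by fun_prop) hj.compl]
    simp [Set.preimage_preimage]

lemma klDiv_joint {d : ℕ} {μ₀ μ₁ ν₀ ν₁ : Measure (EuclideanSpace ℝ (Fin d))}
    [IsFiniteMeasure μ₀] [IsFiniteMeasure μ₁] [IsFiniteMeasure ν₀] [IsFiniteMeasure ν₁]
    (h₀ : μ₀ ≪ ν₀) (h₁ : μ₁ ≪ ν₁)
    (hint₀ : Integrable (llr μ₀ ν₀) μ₀) (hint₁ : Integrable (llr μ₁ ν₁) μ₁) :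
    klDiv (joint d μ₀ μ₁) (joint d ν₀ ν₁) =
      ((1 / 2 : ℝ) : EReal) * (klDiv μ₀ ν₀ + klDiv μ₁ ν₁) := by
  have hlabel (i : Fin 2) :
      MeasurableEmbedding fun x : EuclideanSpace ℝ (Fin d) ↦ (x, i) :=
    measurableEmbedding_prod_mk_right i
  rw [joint, joint, ← smul_add, ← smul_add, klDiv_smul_smul (by simp) (by simp),
    klDiv_add_add_of_mutuallySingular (mutuallySingular_map_prodMk ν₀ ν₁ zero_ne_one)
      ((hlabel 0).absolutelyContinuous_map h₀) ((hlabel 1).absolutelyContinuous_map h₁)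
      ((integrable_llr_map_iff (hlabel 0) h₀).2 hint₀)
      ((integrable_llr_map_iff (hlabel 1) h₁).2 hint₁),
    klDiv_map (hlabel 0), klDiv_map (hlabel 1)]
  simp

lemma klDiv_joint_right {d : ℕ} {μ ν κ : Measure (EuclideanSpace ℝ (Fin d))}
    [IsFiniteMeasure μ] [IsFiniteMeasure ν] [IsFiniteMeasure κ]
    (h : μ ≪ ν) (hint : Integrable (llr μ ν) μ) :
    klDiv (joint d μ κ) (joint d ν κ) = ((1 / 2 : ℝ) : EReal) * klDiv μ ν := by
  rw [klDiv_joint h .rfl hint ((integrable_congr (llr_self κ)).2 (integrable_zero _ _ _)),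
    klDiv_self, add_zero]

end Joint

section Conditioning

variable {X : Type*} [MeasurableSpace X] {μ : Measure X} {s t : Set X} {a b m : ℝ≥0∞}

lemma inv_smul_restrict_le_smul_cond (hs : μ s ≠ ∞) (h : μ s ≤ a * m) :
    m⁻¹ • μ.restrict s ≤ a • μ[|s] := by
  rcases eq_or_ne (μ s) 0 with hs₀ | hs₀
  · simp [Measure.restrict_eq_zero.2 hs₀, Measure.zero_le]
  · rw [ProbabilityTheory.cond, smul_smul]
    gcongr
    rw [← div_eq_mul_inv, ENNReal.le_div_iff_mul_le (.inl hs₀) (.inl hs), mul_comm,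
      ← div_eq_mul_inv]
    exact ENNReal.div_le_of_le_mul h

lemma cond_union_le (hs : μ s ≠ ∞) (ht : μ t ≠ ∞) (hsa : μ s ≤ a * μ (s ∪ t))
    (htb : μ t ≤ b * μ (s ∪ t)) : μ[|s ∪ t] ≤ a • μ[|s] + b • μ[|t] :=
  calc μ[|s ∪ t] ≤ (μ (s ∪ t))⁻¹ • (μ.restrict s + μ.restrict t) := by
        unfold ProbabilityTheory.cond
        gcongr
        exact Measure.restrict_union_le s t
    _ = (μ (s ∪ t))⁻¹ • μ.restrict s + (μ (s ∪ t))⁻¹ • μ.restrict t := smul_add _ _ _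
    _ ≤ a • μ[|s] + b • μ[|t] :=
        add_le_add (inv_smul_restrict_le_smul_cond hs hsa) (inv_smul_restrict_le_smul_cond ht htb)

end Conditioning

section Annulus

variable {d : ℕ} {a b c Δ l : ℝ}

lemma annulus_zero_left : annulus d 0 b = Metric.closedBall 0 b := by
  ext x
  simp [annulus]

lemma annulus_union_annulus (hab : a ≤ b) (hbc : b ≤ c) :
    annulus d a b ∪ annulus d b c = annulus d a c := by
  ext x
  exact Set.ext_iff.1 (Set.Icc_union_Icc_eq_Icc hab hbc) ‖x‖

lemma volume_annulus_ne_top : volume (annulus d a b) ≠ ∞ := by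
  have hsub : annulus d a b ⊆ Metric.closedBall 0 b := fun x hx ↦ by simpa using hx.2
  exact measure_ne_top_of_subset hsub measure_closedBall_lt_top.ne

lemma volume_annulus_zero_left (hb : 0 ≤ b) :
    volume (annulus d 0 b) = ENNReal.ofReal (b ^ d) * volume (annulus d 0 1) := by
  rw [annulus_zero_left, annulus_zero_left, Measure.addHaar_closedBall' _ _ hb,
    finrank_euclideanSpace_fin]

lemma U_eq_cond : U d a b = volume[|annulus d a b] :=
  rfl

instance : IsFiniteMeasure (U d a b) :=
  inferInstanceAs (IsFiniteMeasure volume[|annulus d a b])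

lemma isProbabilityMeasure_U_zero_left (hb : 0 < b) : IsProbabilityMeasure (U d 0 b) := by
  refine cond_isProbabilityMeasure_of_finite ?_ volume_annulus_ne_top
  rw [annulus_zero_left]
  exact (Metric.measure_closedBall_pos volume 0 hb).ne'

instance {X : Type*} [MeasurableSpace X] (μ : Measure X) [IsFiniteMeasure μ] (t : ℝ) :
    IsFiniteMeasure (ENNReal.ofReal t • μ) :=
  μ.smul_finite ENNReal.ofReal_ne_top

instance : IsFiniteMeasure (P0 d Δ l) := by
  unfold P0
  infer_instance

instance : IsFiniteMeasure (P1 d l) := by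
  unfold P1
  infer_instance

lemma Q0_le_smul_P0 (hΔ : 0 ≤ Δ) (hc : 0 ≤ c)
    (hinner : 1 ≤ c * l * (1 + Δ) ^ d) (houter : 1 ≤ c * (1 - l)) :
    Q0 d Δ ≤ ENNReal.ofReal c • P0 d Δ l := by
  have hunion : annulus d 0 1 ∪ annulus d 1 (1 + Δ) = annulus d 0 (1 + Δ) :=
    annulus_union_annulus zero_le_one (by linarith)
  have hpow : 0 ≤ (1 + Δ) ^ d := by positivity
  have hball : volume (annulus d 0 1) ≤
      ENNReal.ofReal (c * l) * volume (annulus d 0 (1 + Δ)) := by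
    rw [volume_annulus_zero_left (b := 1 + Δ) (by linarith), ← mul_assoc,
      ← ENNReal.ofReal_mul' hpow]
    exact le_mul_of_one_le_left' (ENNReal.one_le_ofReal.2 hinner)
  have hshell : volume (annulus d 1 (1 + Δ)) ≤
      ENNReal.ofReal (c * (1 - l)) * volume (annulus d 0 (1 + Δ)) :=
    calc volume (annulus d 1 (1 + Δ)) ≤ volume (annulus d 0 (1 + Δ)) :=
          measure_mono (hunion ▸ Set.subset_union_right)
      _ ≤ ENNReal.ofReal (c * (1 - l)) * volume (annulus d 0 (1 + Δ)) :=
          le_mul_of_one_le_left' (ENNReal.one_le_ofReal.2 houter)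
  rw [← hunion] at hball hshell
  rw [Q0, P0, smul_add, smul_smul, smul_smul, ← ENNReal.ofReal_mul hc, ← ENNReal.ofReal_mul hc,
    U_eq_cond, ← hunion]
  exact cond_union_le volume_annulus_ne_top volume_annulus_ne_top hball hshell

end Annulus

theorem stmt5_general {ε : ℝ} {d : ℕ} {Δ l1 : ℝ} (hΔ : 0 < Δ)
    (μ₁ : Measure (EuclideanSpace ℝ (Fin d))) [IsFiniteMeasure μ₁]
    (h1 : Real.exp (-ε) / (1 + Δ) ^ d ≤ l1) (h2 : l1 ≤ 1 - Real.exp (-ε)) :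
    klDiv (joint d (Q0 d Δ) μ₁) (joint d (P0 d Δ l1) μ₁) ≤ ((ε / 2 : ℝ) : EReal) := by
  have one_le_exp_mul {y : ℝ} (hy : Real.exp (-ε) ≤ y) : 1 ≤ Real.exp ε * y := by
    rwa [Real.exp_neg, inv_le_iff_one_le_mul₀' (Real.exp_pos ε)] at hy
  have hinner : 1 ≤ Real.exp ε * l1 * (1 + Δ) ^ d := by
    rw [mul_assoc]
    exact one_le_exp_mul ((div_le_iff₀ (by positivity)).1 h1)
  have houter : 1 ≤ Real.exp ε * (1 - l1) := one_le_exp_mul (by linarith)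
  have : IsProbabilityMeasure (Q0 d Δ) := isProbabilityMeasure_U_zero_left (by linarith)
  have hle : Q0 d Δ ≤ ENNReal.ofReal (Real.exp ε) • P0 d Δ l1 :=
    Q0_le_smul_P0 hΔ.le (Real.exp_pos ε).le hinner houter
  calc klDiv (joint d (Q0 d Δ) μ₁) (joint d (P0 d Δ l1) μ₁)
      = ((1 / 2 : ℝ) : EReal) * klDiv (Q0 d Δ) (P0 d Δ l1) :=
        klDiv_joint_right (Measure.absolutelyContinuous_of_le_smul hle)
          (integrable_llr_of_le_smul ENNReal.ofReal_ne_top hle)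
    _ ≤ ((1 / 2 : ℝ) : EReal) * (ε : EReal) := by
        gcongr
        simpa [Real.exp_nonneg] using klDiv_le_log_of_le_smul ENNReal.ofReal_ne_top hle
    _ = ((ε / 2 : ℝ) : EReal) := by rw [← EReal.coe_mul, one_div_mul_eq_div]

/-- if `λ₁ > 1/(1+Δ)^d` and `λ₁ < 1 − e^{−ε}` then `KL(Q ‖ P) ≤ ε`. -/
theorem stmt5 (ε : ℝ) (hε : 0 < ε) (d : ℕ) (hd : 1 ≤ d) (Δ l1 l2 : ℝ) (hΔ : 0 < Δ)
    (hl1 : l1 ∈ Set.Ioo (0:ℝ) 1) (hl2 : l2 ∈ Set.Ioo (0:ℝ) 1)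
    (h1 : 1 / (1 + Δ) ^ d < l1) (h2 : l1 < 1 - Real.exp (-ε)) :
    klDiv (joint d (Q0 d Δ) (P1 d l2)) (joint d (P0 d Δ l1) (P1 d l2)) ≤ (ε : EReal) := by
  have hexp : Real.exp (-ε) ≤ 1 := Real.exp_le_one_iff.2 (neg_nonpos.2 hε.le)
  exact (stmt5_general hΔ (P1 d l2) ((by gcongr : _ ≤ 1 / (1 + Δ) ^ d).trans h1.le) h2.le).trans
    (EReal.coe_le_coe_iff.2 (half_le_self hε.le))
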